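/- Let P ⊂ ℝ^d be the convex hull of a finite set of points with rational coordinates, with nonempty interior P°, and let A be a finite set of affine hyperplanes in ℝ^d, each defined by a linear equation with rational coefficients. For a positive integer t let E°_{P,A}(t) be the number of points z ∈ ℤ^d such that (1/t)z lies in P° and on no hyperplane of A. Then E°_{P,A} is a quasipolynomial in t of degree d in which the coefficient of t^d is the constant vol(P) (the Lebesgue volume of P) in every constituent. -/

import Mathlib

open MeasureTheory

/-!
Fourier-Motzkin elimination describes `P°` by finitely many rational inequalities, so after
homogenizing in `t` the counting function is a sum over a box of a function of `(t, z)` in the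
algebra generated by linear forms, indicators of half-spaces through the origin and periodic
functions. This algebra is closed under summation along one coordinate `z` between linear bounds:
its elements are combinations of `c(x) q(z) 1[l(x, z) ≥ 0]` with `q` a quasipolynomial, and if `H`
is an antidifference of `q` then `(H(z) - H(w(x))) 1[l(x, z) ≥ 0]` is one of `q(z) 1[l(x, z) ≥ 0]`,
where `w(x)` is the value of `z` at which the sign of `l(x, z)` changes. Summing out all of `z`
leaves the algebra on `ℤ`, whose elements are quasipolynomial in `t > 0`. Finally
`E(t) / t ^ d → vol P` along each residue class pins down the degrees and leading coefficients.
-/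

namespace Ehrhart

open Filter Topology Polynomial
open Function (Periodic)
open Module (Dual)

section Quasipolynomials

/-- The quasipolynomials on `ℤ`. The constituents are encoded as a periodic family of polynomials
indexed by `ℤ`, of which the value at `z` uses the `z`-th member. -/
def quasipolynomials : Subalgebra ℚ (ℤ → ℚ) where
  carrier := {f | ∃ p : ℕ, 0 < p ∧ ∃ F : ℤ → ℚ[X], Periodic F (p : ℤ) ∧
    ∀ z, f z = (F z).eval (z : ℚ)}
  mul_mem' := by
    rintro f g ⟨p, hp, F, hF, hf⟩ ⟨q, hq, G, hG, hg⟩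
    refine ⟨p * q, by positivity, F * G, ?_, fun z => by simp [hf, hg]⟩
    push_cast
    exact (mul_comm (q : ℤ) p ▸ hF.nat_mul q).mul (hG.nat_mul p)
  add_mem' := by
    rintro f g ⟨p, hp, F, hF, hf⟩ ⟨q, hq, G, hG, hg⟩
    refine ⟨p * q, by positivity, F + G, ?_, fun z => by simp [hf, hg]⟩
    push_cast
    exact (mul_comm (q : ℤ) p ▸ hF.nat_mul q).add (hG.nat_mul p)
  algebraMap_mem' r := ⟨1, one_pos, fun _ => C r, fun _ => rfl, fun _ => by simp⟩

lemma intCast_mem_quasipolynomials : (fun z : ℤ => (z : ℚ)) ∈ quasipolynomials :=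
  ⟨1, one_pos, fun _ => X, fun _ => rfl, fun _ => by simp⟩

lemma mem_quasipolynomials_of_periodic {f : ℤ → ℚ} {p : ℕ} (hp : 0 < p)
    (hf : Periodic f (p : ℤ)) : f ∈ quasipolynomials :=
  ⟨p, hp, fun z => C (f z), hf.comp C, fun _ => by simp⟩

lemma exists_eval_add_sub_eval_eq {h : ℚ} (hh : h ≠ 0) (F : ℚ[X]) :
    ∃ Q : ℚ[X], ∀ x, Q.eval (x + h) - Q.eval x = F.eval x := by
  induction F using Polynomial.induction_on' with
  | add F G hF hG =>
    obtain ⟨Q, hQ⟩ := hF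
    obtain ⟨R, hR⟩ := hG
    refine ⟨Q + R, fun x => ?_⟩
    simp only [eval_add, ← hQ, ← hR]
    ring
  | monomial n a =>
    -- Bernoulli polynomials satisfy `B (x + 1) - B x = (n + 1) * x ^ n`; rescale them by `h`.
    refine ⟨C (a * h ^ n / (n + 1)) * (Polynomial.bernoulli (n + 1)).comp (C h⁻¹ * X),
      fun x => ?_⟩
    have hn : (n : ℚ) + 1 ≠ 0 := by positivity
    have hx : h⁻¹ * (x + h) = 1 + h⁻¹ * x := by field_simp; ring
    simp only [eval_mul, eval_C, eval_comp, eval_X, hx, Polynomial.bernoulli_eval_one_add,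
      eval_monomial, Nat.add_sub_cancel, mul_pow, inv_pow]
    push_cast
    field_simp
    ring

lemma exists_antidifference_mem_quasipolynomials {f : ℤ → ℚ} (hf : f ∈ quasipolynomials) :
    ∃ H ∈ quasipolynomials, ∀ z, H (z + 1) - H z = f z := by
  obtain ⟨p, hp, F, hF, hf⟩ := hf
  choose Δinv hΔinv using exists_eval_add_sub_eval_eq (h := p) (by positivity)
  let Q : ℤ → ℚ[X] := fun z => Δinv (F z)
  have hQ : Periodic Q p := hF.comp Δinv
  -- Summing over one period telescopes the `p`-step differences to a one-step difference.
  refine ⟨fun z => ∑ j ∈ Finset.range p, (Q (z + j)).eval ((z : ℚ) + j),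
    ⟨p, hp, fun z => ∑ j ∈ Finset.range p, (Q (z + j)).comp (X + C (j : ℚ)), fun z => ?_,
      fun z => by simp [eval_finsetSum]⟩, fun z => ?_⟩
  · simp only [add_right_comm z (p : ℤ), hQ _]
  · calc
      _ = ∑ j ∈ Finset.range p, ((Q (z + (j + 1 : ℕ))).eval ((z : ℚ) + (j + 1 : ℕ))
            - (Q (z + j)).eval ((z : ℚ) + j)) := by
        rw [← Finset.sum_sub_distrib]
        refine Finset.sum_congr rfl fun j _ => ?_
        push_cast
        rw [add_right_comm z, add_right_comm (z : ℚ), add_assoc z, add_assoc (z : ℚ)]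
      _ = (Q (z + p)).eval ((z : ℚ) + p) - (Q z).eval (z : ℚ) := by
        rw [Finset.sum_range_sub (fun j : ℕ => (Q (z + j)).eval ((z : ℚ) + j))]
        simp
      _ = f z := by rw [hQ, hΔinv, hf]

lemma sum_range_indicator_emod_eq {p : ℕ} (hp : 0 < p) (g : ℤ → ℚ) (z : ℤ) :
    ∑ r ∈ Finset.range p, (if z % p = r then 1 else 0) * g r = g (z % p) := by
  have hlt := Int.emod_lt_of_pos z (Int.natCast_pos.2 hp)
  obtain ⟨r, hr⟩ := Int.eq_ofNat_of_zero_le (Int.emod_nonneg z (Int.natCast_ne_zero.2 hp.ne'))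
  simp only [hr, Nat.cast_inj, ite_mul, one_mul, zero_mul, Finset.sum_ite_eq, Finset.mem_range]
  exact if_pos (by omega)

end Quasipolynomials

section PiecewiseQuasipolynomials

variable {M N : Type*} [AddCommGroup M] [AddCommGroup N]

variable (M) in
/-- The algebra of functions on an abelian group generated by the integral linear forms, the
indicators of their nonnegativity sets and the periodic functions. All linear forms are homogeneous:
this is what makes the restriction to a ray `t ↦ t • x` quasipolynomial for every `t > 0`, and not
only for large `t`. -/
def piecewiseQuasipolynomials : Subalgebra ℚ (M → ℚ) :=
  Algebra.adjoin ℚ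
    (Set.range (fun (l : M →+ ℤ) x => (l x : ℚ)) ∪
      Set.range (fun l : M →+ ℤ => {x | 0 ≤ l x}.indicator 1) ∪
      {f | ∃ p : ℕ, 0 < p ∧ ∀ y, Periodic f (p • y)})

lemma linear_mem_piecewiseQuasipolynomials (l : M →+ ℤ) :
    (fun x => (l x : ℚ)) ∈ piecewiseQuasipolynomials M :=
  Algebra.subset_adjoin (.inl (.inl ⟨l, rfl⟩))

lemma indicator_nonneg_mem_piecewiseQuasipolynomials (l : M →+ ℤ) :
    {x | 0 ≤ l x}.indicator 1 ∈ piecewiseQuasipolynomials M :=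
  Algebra.subset_adjoin (.inl (.inr ⟨l, rfl⟩))

lemma mem_piecewiseQuasipolynomials_of_periodic {f : M → ℚ} {p : ℕ} (hp : 0 < p)
    (hf : ∀ y, Periodic f (p • y)) : f ∈ piecewiseQuasipolynomials M :=
  Algebra.subset_adjoin (.inr ⟨p, hp, hf⟩)

@[elab_as_elim]
lemma piecewiseQuasipolynomials_induction
    {motive : (f : M → ℚ) → f ∈ piecewiseQuasipolynomials M → Prop}
    (linear : ∀ l : M →+ ℤ, motive _ (linear_mem_piecewiseQuasipolynomials l))
    (indicator : ∀ l : M →+ ℤ, motive _ (indicator_nonneg_mem_piecewiseQuasipolynomials l))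
    (periodic : ∀ (g : M → ℚ) (p : ℕ) (hp : 0 < p) (hg : ∀ y, Periodic g (p • y)),
      motive g (mem_piecewiseQuasipolynomials_of_periodic hp hg))
    (add : ∀ g h hg hh, motive g hg → motive h hh → motive (g + h) (add_mem hg hh))
    (mul : ∀ g h hg hh, motive g hg → motive h hh → motive (g * h) (mul_mem hg hh))
    {f : M → ℚ} (hf : f ∈ piecewiseQuasipolynomials M) : motive f hf := by
  induction hf using Algebra.adjoin_induction with
  | mem f hf =>
    rcases hf with (⟨l, rfl⟩ | ⟨l, rfl⟩) | ⟨p, hp, hf⟩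
    exacts [linear l, indicator l, periodic f p hp hf]
  | algebraMap r => exact periodic _ 1 one_pos fun _ _ => rfl
  | add g h hg hh ihg ihh => exact add g h hg hh ihg ihh
  | mul g h hg hh ihg ihh => exact mul g h hg hh ihg ihh

lemma comp_mem_piecewiseQuasipolynomials {f : M → ℚ} (hf : f ∈ piecewiseQuasipolynomials M)
    (φ : N →+ M) : f ∘ φ ∈ piecewiseQuasipolynomials N := by
  induction hf using piecewiseQuasipolynomials_induction with
  | linear l => exact linear_mem_piecewiseQuasipolynomials (l.comp φ)
  | indicator l => exact indicator_nonneg_mem_piecewiseQuasipolynomials (l.comp φ)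
  | periodic g p hp hg =>
    exact mem_piecewiseQuasipolynomials_of_periodic hp fun y x => by simp [hg (φ y) (φ x)]
  | add g h _ _ hg hh => exact add_mem hg hh
  | mul g h _ _ hg hh => exact mul_mem hg hh

lemma map_add_mul_natAbs_nsmul (m : M →+ ℤ) (a : ℤ) (p : ℕ) (x y : M) :
    m (x + (p * a.natAbs) • y) = m x + a * (a.sign * m y * p) := by
  have : (a.natAbs : ℤ) = a * a.sign := (Int.mul_sign_self a).symm
  rw [map_add, map_nsmul, nsmul_eq_mul, Nat.cast_mul, this]
  ring

lemma ediv_mem_piecewiseQuasipolynomials (m : M →+ ℤ) (a : ℤ) :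
    (fun x => ((m x / a : ℤ) : ℚ)) ∈ piecewiseQuasipolynomials M := by
  rcases eq_or_ne a 0 with rfl | ha
  · simp only [Int.ediv_zero, Int.cast_zero]
    exact zero_mem _
  have hmod : (fun x => ((m x % a : ℤ) : ℚ)) ∈ piecewiseQuasipolynomials M :=
    mem_piecewiseQuasipolynomials_of_periodic (p := 1 * a.natAbs) (by simpa using ha) fun y x => by
      simp only [map_add_mul_natAbs_nsmul, Int.add_mul_emod_self_left]
  convert! (piecewiseQuasipolynomials M).smul_mem
    (sub_mem (linear_mem_piecewiseQuasipolynomials m) hmod) (a : ℚ)⁻¹ using 2 with x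
  have hdiv : (a : ℚ) * (m x / a : ℤ) = m x - (m x % a : ℤ) := by
    exact_mod_cast (eq_sub_of_add_eq (Int.mul_ediv_add_emod (m x) a))
  simp [← hdiv, ha]

lemma quasipolynomial_comp_ediv_mem {H : ℤ → ℚ} (hH : H ∈ quasipolynomials) (m : M →+ ℤ)
    (a c : ℤ) : (fun x => H (c - m x / a)) ∈ piecewiseQuasipolynomials M := by
  obtain ⟨p, hp, F, hF, hH⟩ := hH
  rcases eq_or_ne a 0 with rfl | ha
  · simp only [Int.ediv_zero, sub_zero]
    exact algebraMap_mem _ (H c)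
  let y : M → ℤ := fun x => c - m x / a
  have hy : (fun x => (y x : ℚ)) ∈ piecewiseQuasipolynomials M := by
    convert! sub_mem (algebraMap_mem (piecewiseQuasipolynomials M) (c : ℚ))
      (ediv_mem_piecewiseQuasipolynomials m a) using 2
    simp [y]
  have hres (r : ℕ) :
      (fun x => if y x % p = r then (1 : ℚ) else 0) ∈ piecewiseQuasipolynomials M := by
    refine mem_piecewiseQuasipolynomials_of_periodic
      (Nat.mul_pos hp (Int.natAbs_pos.2 ha)) fun w x => ?_
    simp only [y, map_add_mul_natAbs_nsmul, Int.add_mul_ediv_left _ _ ha, ← sub_sub,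
      Int.sub_mul_emod_self_right]
  have heval (r : ℕ) : (fun x => (F r).eval (y x : ℚ)) ∈ piecewiseQuasipolynomials M := by
    have := Algebra.adjoin_le (Set.singleton_subset_iff.2 hy)
      (aeval_mem_adjoin_singleton ℚ (p := F r) _)
    simpa [aeval_pi_apply] using this
  convert! sum_mem fun r (_ : r ∈ Finset.range p) => mul_mem (hres r) (heval r) using 1
  ext x
  have hFmod : F (y x % p) = F (y x) := by
    rw [Int.emod_def, mul_comm]; exact hF.sub_int_mul_eq _
  simp only [Finset.sum_apply, Pi.mul_apply]
  rw [sum_range_indicator_emod_eq hp fun r => (F r).eval (y x : ℚ), hFmod, hH]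

end PiecewiseQuasipolynomials

section Summation

variable {M : Type*} [AddCommGroup M]

variable (M) in
/-- A normal form, linear in its last factor, for piecewise quasipolynomials on `M × ℤ`: the span of
the products of a piecewise quasipolynomial in the first variable, a quasipolynomial in the second
one and a single indicator of a half-space. -/
def fiberwiseQuasipolynomials : Submodule ℚ (M × ℤ → ℚ) :=
  Submodule.span ℚ {f | ∃ c ∈ piecewiseQuasipolynomials M, ∃ q ∈ quasipolynomials,
    ∃ l : M × ℤ →+ ℤ, f = fun x => c x.1 * q x.2 * {y | 0 ≤ l y}.indicator 1 x}

lemma mul_mul_indicator_mem_fiberwiseQuasipolynomials {c : M → ℚ} {q : ℤ → ℚ}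
    (hc : c ∈ piecewiseQuasipolynomials M) (hq : q ∈ quasipolynomials) (l : M × ℤ →+ ℤ) :
    (fun x => c x.1 * q x.2 * {y | 0 ≤ l y}.indicator 1 x) ∈ fiberwiseQuasipolynomials M :=
  Submodule.subset_span ⟨c, hc, q, hq, l, rfl⟩

lemma mul_mem_fiberwiseQuasipolynomials_of_components {c : M → ℚ} {q : ℤ → ℚ}
    (hc : c ∈ piecewiseQuasipolynomials M) (hq : q ∈ quasipolynomials) :
    (fun x => c x.1 * q x.2) ∈ fiberwiseQuasipolynomials M := by
  simpa using mul_mul_indicator_mem_fiberwiseQuasipolynomials hc hq 0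

lemma map_eq_map_fst_add (l : M × ℤ →+ ℤ) (x : M × ℤ) : l x = l (x.1, 0) + x.2 * l (0, 1) := by
  rw [← smul_eq_mul, ← map_zsmul, ← map_add]
  simp

lemma map_fst_eq_of_map_zero_one_eq_zero {l : M × ℤ →+ ℤ} (hl : l (0, 1) = 0) (x : M × ℤ) :
    l (x.1, 0) = l x := by
  rw [map_eq_map_fst_add l x, hl, mul_zero, add_zero]

-- Half-lines pointing in the same direction: one contains the other.
lemma ite_nonneg_mul_ite_nonneg_eq_of_sub {a a' : ℤ} (ha : 0 < a) (ha' : 0 < a') (u v : ℤ) :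
    (if 0 ≤ u then 1 else 0) * (if 0 ≤ v then 1 else 0) =
      (if 0 ≤ a * v - a' * u then 1 else 0) * (if 0 ≤ u then 1 else 0) +
        (1 - if 0 ≤ a * v - a' * u then 1 else 0) * (if 0 ≤ v then (1 : ℚ) else 0) := by
  have hsub (h : 0 ≤ a * v - a' * u) (hu : 0 ≤ u) : 0 ≤ v := by nlinarith
  have hsub' (h : ¬ 0 ≤ a * v - a' * u) (hv : 0 ≤ v) : 0 ≤ u := by nlinarith
  grind

-- Half-lines pointing in opposite directions: they cover the line or are disjoint.
lemma ite_nonneg_mul_ite_nonneg_eq_of_add {a a' : ℤ} (ha : 0 < a) (ha' : 0 < a') (u v : ℤ) :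
    (if 0 ≤ u then 1 else 0) * (if 0 ≤ v then 1 else 0) =
      (if 0 ≤ a * v + a' * u then 1 else 0) * (if 0 ≤ u then 1 else 0) +
        (if 0 ≤ a * v + a' * u then 1 else 0) * (if 0 ≤ v then 1 else 0) +
          -(if 0 ≤ a * v + a' * u then (1 : ℚ) else 0) := by
  have hcover (h : 0 ≤ a * v + a' * u) (hu : ¬ 0 ≤ u) : 0 ≤ v := by nlinarith
  have hdisj (h : ¬ 0 ≤ a * v + a' * u) (hu : 0 ≤ u) : ¬ 0 ≤ v := fun hv => h (by positivity)
  split_ifs <;> simp_all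

lemma exists_indicator_mul_indicator_eq (l l' : M × ℤ →+ ℤ) :
    ∃ e ∈ piecewiseQuasipolynomials M, ∃ e' ∈ piecewiseQuasipolynomials M,
      ∃ e'' ∈ piecewiseQuasipolynomials M, ∀ x : M × ℤ,
        {y | 0 ≤ l y}.indicator (1 : M × ℤ → ℚ) x * {y | 0 ≤ l' y}.indicator 1 x =
          e x.1 * {y | 0 ≤ l y}.indicator 1 x + e' x.1 * {y | 0 ≤ l' y}.indicator 1 x +
            e'' x.1 := by
  have hind (k : M × ℤ →+ ℤ) := indicator_nonneg_mem_piecewiseQuasipolynomials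
    (k.comp (AddMonoidHom.inl M ℤ))
  rcases eq_or_ne (l (0, 1)) 0 with hl | hl
  · refine ⟨0, zero_mem _, _, hind l, 0, zero_mem _, fun x => ?_⟩
    simp [Set.indicator_apply, map_fst_eq_of_map_zero_one_eq_zero hl]
  rcases eq_or_ne (l' (0, 1)) 0 with hl' | hl'
  · refine ⟨_, hind l', 0, zero_mem _, 0, zero_mem _, fun x => ?_⟩
    simp [Set.indicator_apply, map_fst_eq_of_map_zero_one_eq_zero hl', ← ite_and, and_comm]
  have ha := abs_pos.2 hl
  have ha' := abs_pos.2 hl'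
  have habs : |(|l (0, 1)| * l' (0, 1))| = |(|l' (0, 1)| * l (0, 1))| := by
    simp only [abs_mul, abs_abs, mul_comm]
  rcases abs_eq_abs.1 habs with heq | heq
  · let k := |l (0, 1)| • l' - |l' (0, 1)| • l
    have hkx (x) : k x = |l (0, 1)| * l' x - |l' (0, 1)| * l x := by simp [k]
    have hk : k (0, 1) = 0 := by rw [hkx, heq, sub_self]
    have hkfst (x) : k (x.1, 0) = |l (0, 1)| * l' x - |l' (0, 1)| * l x := by
      rw [map_fst_eq_of_map_zero_one_eq_zero hk, hkx]
    refine ⟨_, hind k, _, sub_mem (one_mem _) (hind k), 0, zero_mem _, fun x => ?_⟩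
    simp only [Set.indicator_apply, Set.mem_ofPred_eq, Pi.one_apply, AddMonoidHom.coe_comp,
      Function.comp_apply, AddMonoidHom.inl_apply, hkfst,
      Pi.sub_apply, Pi.zero_apply, add_zero]
    exact ite_nonneg_mul_ite_nonneg_eq_of_sub ha ha' _ _
  · let k := |l (0, 1)| • l' + |l' (0, 1)| • l
    have hkx (x) : k x = |l (0, 1)| * l' x + |l' (0, 1)| * l x := by simp [k]
    have hk : k (0, 1) = 0 := by rw [hkx, heq, neg_add_cancel]
    have hkfst (x) : k (x.1, 0) = |l (0, 1)| * l' x + |l' (0, 1)| * l x := by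
      rw [map_fst_eq_of_map_zero_one_eq_zero hk, hkx]
    refine ⟨_, hind k, _, hind k, _, neg_mem (hind k), fun x => ?_⟩
    simp only [Set.indicator_apply, Set.mem_ofPred_eq, Pi.one_apply, AddMonoidHom.coe_comp,
      Function.comp_apply, AddMonoidHom.inl_apply, hkfst,
      Pi.neg_apply]
    exact ite_nonneg_mul_ite_nonneg_eq_of_add ha ha' _ _

lemma mul_mem_fiberwiseQuasipolynomials {f g : M × ℤ → ℚ}
    (hf : f ∈ fiberwiseQuasipolynomials M) (hg : g ∈ fiberwiseQuasipolynomials M) :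
    f * g ∈ fiberwiseQuasipolynomials M := by
  suffices fiberwiseQuasipolynomials M * fiberwiseQuasipolynomials M ≤
      fiberwiseQuasipolynomials M from this (Submodule.mul_mem_mul hf hg)
  conv_lhs => rw [fiberwiseQuasipolynomials, Submodule.span_mul_span]
  rw [Submodule.span_le]
  rintro _ ⟨_, ⟨c, hc, q, hq, l, rfl⟩, _, ⟨c', hc', q', hq', l', rfl⟩, rfl⟩
  obtain ⟨e, he, e', he', e'', he'', hll'⟩ := exists_indicator_mul_indicator_eq l l'
  have hqq' := mul_mem hq hq'
  have hcc' := mul_mem hc hc'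
  convert! add_mem (add_mem
    (mul_mul_indicator_mem_fiberwiseQuasipolynomials (mul_mem hcc' he) hqq' l)
    (mul_mul_indicator_mem_fiberwiseQuasipolynomials (mul_mem hcc' he') hqq' l'))
    (mul_mem_fiberwiseQuasipolynomials_of_components (mul_mem hcc' he'') hqq') using 1
  ext x
  simp only [Pi.mul_apply, Pi.add_apply]
  linear_combination c x.1 * c' x.1 * q x.2 * q' x.2 * hll' x

lemma piecewiseQuasipolynomials_le_fiberwiseQuasipolynomials :
    (piecewiseQuasipolynomials (M × ℤ)).toSubmodule ≤ fiberwiseQuasipolynomials M := by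
  intro f hf
  induction hf using piecewiseQuasipolynomials_induction with
  | linear l =>
    convert! add_mem
      (mul_mem_fiberwiseQuasipolynomials_of_components
        (linear_mem_piecewiseQuasipolynomials (l.comp (AddMonoidHom.inl M ℤ)))
        (one_mem quasipolynomials))
      (mul_mem_fiberwiseQuasipolynomials_of_components
        (algebraMap_mem (piecewiseQuasipolynomials M) (l (0, 1) : ℚ))
        intCast_mem_quasipolynomials) using 1
    ext x
    simp [map_eq_map_fst_add l x, mul_comm]
  | indicator l =>
    simpa using mul_mul_indicator_mem_fiberwiseQuasipolynomials
      (one_mem (piecewiseQuasipolynomials M)) (one_mem quasipolynomials) l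
  | periodic g p hp hg =>
    have hgr (r : ℕ) : (fun x => g (x, r)) ∈ piecewiseQuasipolynomials M :=
      mem_piecewiseQuasipolynomials_of_periodic hp fun y x => by
        simpa using hg (y, 0) (x, r)
    have hres (r : ℕ) : (fun z : ℤ => if z % p = r then (1 : ℚ) else 0) ∈ quasipolynomials :=
      mem_quasipolynomials_of_periodic hp fun z => by simp
    convert! sum_mem fun r (_ : r ∈ Finset.range p) =>
      mul_mem_fiberwiseQuasipolynomials_of_components (hgr r) (hres r) using 1
    ext ⟨x, z⟩
    have hgz : g (x, z % p) = g (x, z) := by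
      have := (hg (0, 1)).sub_zsmul_eq (x := (x, z)) (z / p)
      simpa [Int.emod_def, mul_comm] using this
    simp only [Finset.sum_apply, mul_comm (g _)]
    rw [sum_range_indicator_emod_eq hp fun r => g (x, r), hgz]
  | add g h _ _ hg hh => exact add_mem hg hh
  | mul g h _ _ hg hh => exact mul_mem_fiberwiseQuasipolynomials hg hh

lemma succ_eq_sub_ediv_of_sign_change {a m z : ℤ}
    (h : ¬(0 ≤ m + z * a ↔ 0 ≤ m + (z + 1) * a)) :
    z + 1 = (if a < 0 then 1 else 0) - m / a := by
  rcases lt_trichotomy a 0 with ha | rfl | ha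
  · have hnonneg (w : ℤ) : 0 ≤ m + w * a ↔ w ≤ -(m / a) := by
      rw [← Int.ediv_neg, Int.le_ediv_iff_mul_le (neg_pos.2 ha)]
      constructor <;> intro <;> linarith
    rw [hnonneg, hnonneg] at h
    rw [if_pos ha]
    omega
  · simp at h
  · have hnonneg (w : ℤ) : 0 ≤ m + w * a ↔ -w ≤ m / a := by
      rw [Int.le_ediv_iff_mul_le ha]
      constructor <;> intro <;> linarith
    rw [hnonneg, hnonneg] at h
    rw [if_neg ha.not_gt]
    omega

lemma exists_antidifference_mem_piecewiseQuasipolynomials {f : M × ℤ → ℚ}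
    (hf : f ∈ piecewiseQuasipolynomials (M × ℤ)) :
    ∃ G ∈ piecewiseQuasipolynomials (M × ℤ), ∀ x z, G (x, z + 1) - G (x, z) = f (x, z) := by
  replace hf : f ∈ fiberwiseQuasipolynomials M :=
    piecewiseQuasipolynomials_le_fiberwiseQuasipolynomials hf
  induction hf using Submodule.span_induction with
  | mem f hf =>
    obtain ⟨c, hc, q, hq, l, rfl⟩ := hf
    obtain ⟨H, hH, hHq⟩ := exists_antidifference_mem_quasipolynomials hq
    -- Subtracting from `H` its value at the wall of the half-space makes the jump there vanish.
    let w : M × ℤ → ℤ := fun x => (if l (0, 1) < 0 then 1 else 0) - l (x.1, 0) / l (0, 1)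
    have hw : (fun x => H (w x)) ∈ piecewiseQuasipolynomials (M × ℤ) :=
      quasipolynomial_comp_ediv_mem hH
        (l.comp ((AddMonoidHom.inl M ℤ).comp (AddMonoidHom.fst M ℤ))) _ _
    have hHsnd : (fun x => H x.2) ∈ piecewiseQuasipolynomials (M × ℤ) := by
      simpa using quasipolynomial_comp_ediv_mem hH (-AddMonoidHom.snd M ℤ) 1 0
    refine ⟨_, mul_mem (mul_mem (comp_mem_piecewiseQuasipolynomials hc (AddMonoidHom.fst M ℤ))
      (sub_mem hHsnd hw)) (indicator_nonneg_mem_piecewiseQuasipolynomials l), fun x z => ?_⟩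
    have hwall : (H (z + 1) - H (w (x, z))) * ({y | 0 ≤ l y}.indicator 1 (x, z + 1) -
        {y | 0 ≤ l y}.indicator 1 (x, z)) = 0 := by
      by_cases h : 0 ≤ l (x, z) ↔ 0 ≤ l (x, z + 1)
      · simp [Set.indicator_apply, h]
      · rw [map_eq_map_fst_add l (x, z), map_eq_map_fst_add l (x, z + 1)] at h
        simp [w, succ_eq_sub_ediv_of_sign_change h]
    simp only [Pi.mul_apply, Pi.sub_apply, Function.comp_apply, AddMonoidHom.coe_fst]
    linear_combination c x * hwall + c x * {y | 0 ≤ l y}.indicator 1 (x, z) * hHq z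
  | zero => exact ⟨0, zero_mem _, fun _ _ => by simp⟩
  | add f g _ _ hf hg =>
    obtain ⟨F, hF, hf⟩ := hf
    obtain ⟨G, hG, hg⟩ := hg
    exact ⟨F + G, add_mem hF hG, fun x z => by simp [← hf, ← hg, add_sub_add_comm]⟩
  | smul r f _ hf =>
    obtain ⟨F, hF, hf⟩ := hf
    exact ⟨r • F, Subalgebra.smul_mem _ hF r, fun x z => by simp [← hf, mul_sub]⟩

lemma sum_Ico_neg_sub (G : ℤ → ℚ) {b : ℤ} (hb : 0 ≤ b) :
    ∑ z ∈ Finset.Ico (-b) b, (G (z + 1) - G z) = G b - G (-b) := by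
  lift b to ℕ using hb
  simpa [neg_add_eq_sub] using congrArg Neg.neg (Finset.sum_Ico_int_sub b G)

lemma exists_sum_Ico_mem_piecewiseQuasipolynomials {f : M × ℤ → ℚ}
    (hf : f ∈ piecewiseQuasipolynomials (M × ℤ)) (b : M →+ ℤ) :
    ∃ F ∈ piecewiseQuasipolynomials M, ∀ x, 0 ≤ b x →
      F x = ∑ z ∈ Finset.Ico (-b x) (b x), f (x, z) := by
  obtain ⟨G, hG, hGf⟩ := exists_antidifference_mem_piecewiseQuasipolynomials hf
  refine ⟨_, sub_mem (comp_mem_piecewiseQuasipolynomials hG ((AddMonoidHom.id M).prod b))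
    (comp_mem_piecewiseQuasipolynomials hG ((AddMonoidHom.id M).prod (-b))), fun x hx => ?_⟩
  simp only [← hGf, sum_Ico_neg_sub (fun z => G (x, z)) hx]
  rfl

lemma exists_sum_box_mem_piecewiseQuasipolynomials {d : ℕ} {f : M × (Fin d → ℤ) → ℚ}
    (hf : f ∈ piecewiseQuasipolynomials (M × (Fin d → ℤ))) (b : M →+ ℤ) :
    ∃ F ∈ piecewiseQuasipolynomials M, ∀ x, 0 ≤ b x →
      F x = ∑ z ∈ Fintype.piFinset fun _ => Finset.Ico (-b x) (b x), f (x, z) := by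
  induction d generalizing M with
  | zero =>
    refine ⟨_, comp_mem_piecewiseQuasipolynomials hf (AddMonoidHom.inl M _), fun x _ => ?_⟩
    simp only [Function.comp_apply, AddMonoidHom.inl_apply, Matrix.zero_empty,
      Fintype.piFinset_of_isEmpty, Finset.univ_unique, Finset.sum_singleton]
    congr
  | succ d ih =>
    let φ : (M × ℤ) × (Fin d → ℤ) →+ M × (Fin (d + 1) → ℤ) :=
      ((AddMonoidHom.id M).prodMap
        (Fin.consLinearEquiv ℤ fun _ => ℤ).toAddEquiv.toAddMonoidHom).comp
          AddEquiv.prodAssoc.toAddMonoidHom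
    obtain ⟨F, hF, hFf⟩ := ih (comp_mem_piecewiseQuasipolynomials hf φ)
      (b.comp (AddMonoidHom.fst M ℤ))
    obtain ⟨G, hG, hGF⟩ := exists_sum_Ico_mem_piecewiseQuasipolynomials hF b
    refine ⟨G, hG, fun x hx => ?_⟩
    have hFx (z : ℤ) : F (x, z) = ∑ w ∈ Fintype.piFinset fun _ => Finset.Ico (-b x) (b x),
        f (x, Fin.cons z w) := hFf (x, z) hx
    simp only [hGF x hx, hFx, ← Finset.sum_product']
    exact Finset.sum_equiv (Fin.consEquiv fun _ => ℤ)
      (fun z => by simp [Fin.forall_fin_succ]) fun z _ => rfl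

lemma exists_quasipolynomial_eq_natCast {f : ℤ → ℚ} (hf : f ∈ piecewiseQuasipolynomials ℤ) :
    ∃ H ∈ quasipolynomials, ∀ t : ℕ, 0 < t → f t = H t := by
  have hmap (l : ℤ →+ ℤ) (t : ℤ) : l t = t * l 1 := by
    rw [← smul_eq_mul, ← map_zsmul, smul_eq_mul, mul_one]
  induction hf using piecewiseQuasipolynomials_induction with
  | linear l =>
    exact ⟨_, mul_mem intCast_mem_quasipolynomials (algebraMap_mem _ (l 1 : ℚ)),
      fun t _ => by simp [hmap l t]⟩
  | indicator l =>
    refine ⟨_, algebraMap_mem _ ({y | 0 ≤ l y}.indicator 1 1), fun t ht => ?_⟩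
    simp [Set.indicator_apply, hmap l t, mul_nonneg_iff_of_pos_left (Int.natCast_pos.2 ht)]
  | periodic g p hp hg =>
    exact ⟨g, mem_quasipolynomials_of_periodic hp (by simpa using hg 1), fun _ _ => rfl⟩
  | add g h _ _ hg hh =>
    obtain ⟨G, hG, hg⟩ := hg
    obtain ⟨H, hH, hh⟩ := hh
    exact ⟨G + H, add_mem hG hH, fun t ht => by simp [hg t ht, hh t ht]⟩
  | mul g h _ _ hg hh =>
    obtain ⟨G, hG, hg⟩ := hg
    obtain ⟨H, hH, hh⟩ := hh
    exact ⟨G * H, mul_mem hG hH, fun t ht => by simp [hg t ht, hh t ht]⟩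

end Summation

section Polyhedra

variable {𝕜 E : Type*} [Field 𝕜] [LinearOrder 𝕜] [IsStrictOrderedRing 𝕜] [AddCommGroup E]
  [Module 𝕜 E]

lemma exists_nonneg_forall_mul_le_iff {ι : Type*} {H : Set ι} (hH : H.Finite) (e y : ι → 𝕜) :
    (∃ r, 0 ≤ r ∧ ∀ h ∈ H, r * e h ≤ y h) ↔
      (∀ h ∈ H, 0 ≤ e h → 0 ≤ y h) ∧
        ∀ f ∈ H, ∀ g ∈ H, 0 < e f → e g < 0 → e g * y f ≤ e f * y g := by
  refine ⟨fun ⟨r, hr, hrH⟩ => ⟨fun h hh he => (mul_nonneg hr he).trans (hrH h hh),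
    fun f hf g hg hef heg => ?_⟩, fun ⟨hnonneg, hcross⟩ => ?_⟩
  · nlinarith [hrH f hf, hrH g hg]
  · -- The least admissible `r` is the largest of the lower bounds imposed by the negative `e g`.
    let L : Set 𝕜 := insert 0 ((fun g => y g / e g) '' {g ∈ H | e g < 0})
    have hL : L.Finite := ((hH.subset (Set.sep_subset _ _)).image _).insert 0
    obtain ⟨r, hrL, hr⟩ := L.exists_max_image id hL ⟨0, Set.mem_insert _ _⟩
    refine ⟨r, hr 0 (Set.mem_insert _ _), fun h hh => ?_⟩
    rcases lt_trichotomy (e h) 0 with he | he | he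
    · exact (div_le_iff_of_neg he).1 (hr _ (.inr ⟨h, ⟨hh, he⟩, rfl⟩))
    · simpa [he] using hnonneg h hh he.ge
    · rcases hrL with rfl | ⟨g, ⟨hg, heg⟩, rfl⟩
      · simpa using hnonneg h hh he.le
      · have := hcross h hh g hg he heg
        rw [div_mul_eq_mul_div, div_le_iff_of_neg heg]
        linarith

lemma exists_finite_hull_insert_iff {D : Submodule ℚ (Dual 𝕜 E)} {v : E} {V : Set E}
    (hv : ∀ φ ∈ D, ∃ q : ℚ, φ v = q) {H : Set (Dual 𝕜 E)} (hH : H.Finite) (hHD : H ⊆ D)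
    (hV : ∀ x, x ∈ PointedCone.hull 𝕜 V ↔ ∀ φ ∈ H, 0 ≤ φ x) :
    ∃ H' : Set (Dual 𝕜 E), H'.Finite ∧ H' ⊆ D ∧
      ∀ x, x ∈ PointedCone.hull 𝕜 (insert v V) ↔ ∀ φ ∈ H', 0 ≤ φ x := by
  refine ⟨{φ ∈ H | 0 ≤ φ v} ∪ Set.image2 (fun φ ψ => φ v • ψ - ψ v • φ)
      {φ ∈ H | 0 < φ v} {ψ ∈ H | ψ v < 0},
    (hH.subset (Set.sep_subset _ _)).union
      ((hH.subset (Set.sep_subset _ _)).image2 _ (hH.subset (Set.sep_subset _ _))), ?_,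
    fun x => ?_⟩
  · rintro _ (⟨hφ, -⟩ | ⟨φ, ⟨hφ, -⟩, ψ, ⟨hψ, -⟩, rfl⟩)
    · exact hHD hφ
    · obtain ⟨a, ha⟩ := hv φ (hHD hφ)
      obtain ⟨b, hb⟩ := hv ψ (hHD hψ)
      change φ v • ψ - ψ v • φ ∈ D
      rw [ha, hb, Rat.cast_smul_eq_qsmul, Rat.cast_smul_eq_qsmul]
      exact sub_mem (D.smul_mem a (hHD hψ)) (D.smul_mem b (hHD hφ))
  · calc
      _ ↔ ∃ r : 𝕜, 0 ≤ r ∧ x - r • v ∈ PointedCone.hull 𝕜 V := by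
        rw [Submodule.mem_span_insert]
        constructor
        · rintro ⟨r, z, hz, rfl⟩
          exact ⟨r, r.2, by simpa [Nonneg.mk_smul] using hz⟩
        · rintro ⟨r, hr, hz⟩
          exact ⟨⟨r, hr⟩, _, hz, by simp [Nonneg.mk_smul]⟩
      _ ↔ ∃ r : 𝕜, 0 ≤ r ∧ ∀ φ ∈ H, r * φ v ≤ φ x := by
        simp only [hV, map_sub, map_smul, smul_eq_mul, sub_nonneg]
      _ ↔ _ := by
        rw [exists_nonneg_forall_mul_le_iff hH (fun φ => φ v) (fun φ => φ x)]
        simp only [Set.mem_union, or_imp, forall_and, Set.forall_mem_image2, Set.mem_sep_iff,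
          and_imp, LinearMap.sub_apply, LinearMap.smul_apply, smul_eq_mul, sub_nonneg]
        grind

lemma exists_finite_hull_iff {D : Submodule ℚ (Dual 𝕜 E)} {S : Set (Dual 𝕜 E)} (hS : S.Finite)
    (hSD : S ⊆ D) (hsep : ∀ x, (∀ φ ∈ S, φ x = 0) → x = 0) {V : Set E} (hV : V.Finite)
    (hVD : ∀ v ∈ V, ∀ φ ∈ D, ∃ q : ℚ, φ v = q) :
    ∃ H : Set (Dual 𝕜 E), H.Finite ∧ H ⊆ D ∧
      ∀ x, x ∈ PointedCone.hull 𝕜 V ↔ ∀ φ ∈ H, 0 ≤ φ x := by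
  induction V, hV using Set.Finite.induction_on with
  | empty =>
    refine ⟨S ∪ -S, hS.union hS.neg,
      Set.union_subset hSD fun φ hφ => neg_mem_iff.1 (hSD hφ), fun x => ?_⟩
    rw [PointedCone.hull, Submodule.span_empty, Submodule.mem_bot]
    refine ⟨fun hx => by simp [hx], fun hx => hsep x fun φ hφ => ?_⟩
    have hneg := hx (-φ) (.inr (by simpa using hφ))
    exact le_antisymm (by simpa using hneg) (hx φ (.inl hφ))
  | insert _ _ ih =>
    obtain ⟨H, hH, hHD, hV⟩ := ih fun u hu => hVD u (.inr hu)
    exact exists_finite_hull_insert_iff (hVD _ (.inl rfl)) hH hHD hV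

lemma mem_convexHull_iff_mk_one_mem_hull {V : Finset E} {x : E} :
    x ∈ convexHull 𝕜 (V : Set E) ↔
      (x, (1 : 𝕜)) ∈ PointedCone.hull 𝕜 ((fun v => (v, (1 : 𝕜))) '' V) := by
  have hsum (c : E → {r : 𝕜 // 0 ≤ r}) :
      ∑ v ∈ V, c v • (v, (1 : 𝕜)) = (∑ v ∈ V, (c v : 𝕜) • v, ∑ v ∈ V, (c v : 𝕜)) := by
    refine Prod.ext Prod.fst_sum ?_
    rw [Prod.snd_sum]
    exact Finset.sum_congr rfl fun v _ => mul_one (c v : 𝕜)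
  rw [Finset.mem_convexHull', Submodule.mem_span_image_finset_iff_exists_fun']
  constructor
  · rintro ⟨w, hw, hw1, rfl⟩
    refine ⟨fun v => ⟨max (w v) 0, le_max_right _ _⟩, (hsum _).trans ?_⟩
    have hmax (v) (hv : v ∈ V) : max (w v) 0 = w v := max_eq_left (hw v hv)
    exact Prod.ext (Finset.sum_congr rfl fun v hv => congrArg (· • v) (hmax v hv))
      ((Finset.sum_congr rfl hmax).trans hw1)
  · rintro ⟨c, hc⟩
    obtain ⟨hx, h1⟩ := Prod.ext_iff.1 ((hsum c).symm.trans hc)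
    exact ⟨fun v => c v, fun v _ => (c v).2, h1, hx⟩

end Polyhedra

section Interior

variable {E : Type*} [AddCommGroup E] [Module ℝ E] [TopologicalSpace E] [IsTopologicalAddGroup E]
  [ContinuousSMul ℝ E] [T2Space E] [FiniteDimensional ℝ E]

lemma interior_setOf_nonneg_eq {φ : Dual ℝ (E × ℝ)} (hφ : φ ∘ₗ LinearMap.inl ℝ E ℝ ≠ 0) :
    interior {x | 0 ≤ φ (x, 1)} = {x | 0 < φ (x, 1)} := by
  let f := φ ∘ₗ LinearMap.inl ℝ E ℝ
  have hf (x : E) : φ (x, 1) = f x + φ (0, 1) := by simp [f, ← map_add]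
  have hopen := f.isOpenMap_of_finiteDimensional (f.surjective hφ)
  have hcont := f.continuous_of_finiteDimensional
  have hIci : {x | 0 ≤ φ (x, 1)} = f ⁻¹' Set.Ici (-φ (0, 1)) := by
    ext x; rw [Set.mem_ofPred_eq, hf, Set.mem_preimage, Set.mem_Ici, neg_le_iff_add_nonneg]
  have hIoi : {x | 0 < φ (x, 1)} = f ⁻¹' Set.Ioi (-φ (0, 1)) := by
    ext x; rw [Set.mem_ofPred_eq, hf, Set.mem_preimage, Set.mem_Ioi, neg_lt_iff_pos_add]
  rw [hIci, hIoi, ← hopen.preimage_interior_eq_interior_preimage hcont, interior_Ici]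

lemma exists_subset_interior_eq {H : Set (Dual ℝ (E × ℝ))} (hH : H.Finite)
    (hne : (interior {x : E | ∀ φ ∈ H, 0 ≤ φ (x, 1)}).Nonempty) :
    ∃ H' ⊆ H, interior {x : E | ∀ φ ∈ H, 0 ≤ φ (x, 1)} = {x | ∀ φ ∈ H', 0 < φ (x, 1)} := by
  obtain ⟨x₀, hx₀⟩ := hne
  have hx₀H := interior_subset hx₀
  let H' := {φ ∈ H | φ ∘ₗ LinearMap.inl ℝ E ℝ ≠ 0}
  have hconst (φ : Dual ℝ (E × ℝ)) (h : φ ∘ₗ LinearMap.inl ℝ E ℝ = 0) (x : E) :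
      φ (x, 1) = φ (x₀, 1) := by
    have : φ (x - x₀, 0) = 0 := LinearMap.congr_fun h (x - x₀)
    rwa [← sub_eq_zero, ← map_sub, Prod.mk_sub_mk, sub_self]
  have hinter : {x : E | ∀ φ ∈ H, 0 ≤ φ (x, 1)} = ⋂ φ ∈ H', {x | 0 ≤ φ (x, 1)} := by
    ext x
    simp only [Set.mem_ofPred_eq, Set.mem_iInter]
    refine ⟨fun h φ hφ => h φ hφ.1, fun h φ hφ => ?_⟩
    by_cases h0 : φ ∘ₗ LinearMap.inl ℝ E ℝ = 0
    · exact hconst φ h0 x ▸ hx₀H φ hφ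
    · exact h φ ⟨hφ, h0⟩
  refine ⟨H', Set.sep_subset _ _, ?_⟩
  rw [hinter, (hH.subset (Set.sep_subset _ _)).interior_biInter]
  ext x
  simp only [Set.mem_iInter, Set.mem_ofPred_eq]
  exact forall₂_congr fun φ hφ => by rw [interior_setOf_nonneg_eq hφ.2]; rfl

end Interior

section RationalForms

variable {ι : Type*}

variable (ι) in
/-- The linear forms on `(ι → ℝ) × ℝ` with rational coefficients. An affine function on `ι → ℝ` is
encoded as the restriction of a linear form to the slice `x ↦ (x, 1)`. -/
noncomputable def rationalForms : Submodule ℚ (Dual ℝ ((ι → ℝ) × ℝ)) :=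
  Submodule.span ℚ (insert (LinearMap.snd ℝ (ι → ℝ) ℝ)
    (Set.range fun i => LinearMap.proj i ∘ₗ LinearMap.fst ℝ (ι → ℝ) ℝ))

lemma snd_mem_rationalForms : LinearMap.snd ℝ (ι → ℝ) ℝ ∈ rationalForms ι :=
  Submodule.subset_span (.inl rfl)

lemma proj_comp_fst_mem_rationalForms (i : ι) :
    LinearMap.proj i ∘ₗ LinearMap.fst ℝ (ι → ℝ) ℝ ∈ rationalForms ι :=
  Submodule.subset_span (.inr ⟨i, rfl⟩)

lemma exists_rat_eq_of_mem_rationalForms {φ : Dual ℝ ((ι → ℝ) × ℝ)} (hφ : φ ∈ rationalForms ι)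
    {x : ι → ℝ} (hx : ∀ i, ∃ a : ℚ, x i = a) : ∃ q : ℚ, φ (x, 1) = q := by
  induction hφ using Submodule.span_induction with
  | mem φ hφ =>
    rcases hφ with rfl | ⟨i, rfl⟩
    exacts [⟨1, by simp⟩, hx i]
  | zero => exact ⟨0, by simp⟩
  | add φ ψ _ _ hφ hψ =>
    obtain ⟨a, ha⟩ := hφ
    obtain ⟨b, hb⟩ := hψ
    exact ⟨a + b, by simp [ha, hb]⟩
  | smul q φ _ hφ =>
    obtain ⟨a, ha⟩ := hφ
    exact ⟨q * a, by simp [ha, Rat.smul_def]⟩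

lemma exists_addMonoidHom_eq_mul_of_mem_rationalForms {φ : Dual ℝ ((ι → ℝ) × ℝ)}
    (hφ : φ ∈ rationalForms ι) :
    ∃ N : ℕ, 0 < N ∧ ∃ l : ℤ × (ι → ℤ) →+ ℤ,
      ∀ t z, (l (t, z) : ℝ) = N * φ (fun i => (z i : ℝ), (t : ℝ)) := by
  induction hφ using Submodule.span_induction with
  | mem φ hφ =>
    rcases hφ with rfl | ⟨i, rfl⟩
    · exact ⟨1, one_pos, AddMonoidHom.fst ℤ (ι → ℤ), by simp⟩
    · exact ⟨1, one_pos, (Pi.evalAddMonoidHom (fun _ => ℤ) i).comp (AddMonoidHom.snd ℤ (ι → ℤ)),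
        by simp⟩
  | zero => exact ⟨1, one_pos, 0, by simp⟩
  | add φ ψ _ _ hφ hψ =>
    obtain ⟨N, hN, l, hl⟩ := hφ
    obtain ⟨K, hK, k, hk⟩ := hψ
    refine ⟨N * K, by positivity, K • l + N • k, fun t z => ?_⟩
    simp [hl, hk]
    ring
  | smul q φ _ hφ =>
    obtain ⟨N, hN, l, hl⟩ := hφ
    refine ⟨q.den * N, mul_pos q.den_pos hN, q.num • l, fun t z => ?_⟩
    have hq : (q.num : ℝ) = q.den * q := by exact_mod_cast (Rat.den_mul_eq_num q).symm
    simp [hl, hq, Rat.smul_def]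
    ring

lemma exists_interior_convexHull_eq [Finite ι] {V : Finset (ι → ℝ)}
    (hV : ∀ v ∈ V, ∀ i, ∃ a : ℚ, v i = a)
    (hne : (interior (convexHull ℝ (V : Set (ι → ℝ)))).Nonempty) :
    ∃ H : Set (Dual ℝ ((ι → ℝ) × ℝ)), H.Finite ∧ H ⊆ rationalForms ι ∧
      interior (convexHull ℝ (V : Set (ι → ℝ))) = {x | ∀ φ ∈ H, 0 < φ (x, 1)} := by
  obtain ⟨H, hH, hHD, hVH⟩ := exists_finite_hull_iff (D := rationalForms ι)
    (V := (fun v => (v, (1 : ℝ))) '' V) ((Set.finite_range _).insert _) Submodule.subset_span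
    (fun x hx => Prod.ext (funext fun i => hx _ (.inr ⟨i, rfl⟩)) (hx _ (.inl rfl)))
    (V.finite_toSet.image _)
    (Set.forall_mem_image.2 fun v hv _ hφ => exists_rat_eq_of_mem_rationalForms hφ (hV v hv))
  have hhull : convexHull ℝ (V : Set (ι → ℝ)) = {x | ∀ φ ∈ H, 0 ≤ φ (x, 1)} :=
    Set.ext fun x => mem_convexHull_iff_mk_one_mem_hull.trans (hVH (x, 1))
  rw [hhull] at hne ⊢
  obtain ⟨H', hH', hint⟩ := exists_subset_interior_eq hH hne
  exact ⟨H', hH.subset hH', hH'.trans hHD, hint⟩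

variable [Fintype ι]

/-- The linear form on `(ι → ℝ) × ℝ` whose restriction to the slice `x ↦ (x, 1)` vanishes exactly on
the hyperplane `∑ i, a i * x i = b`. -/
noncomputable def hyperplaneForm (a : ι → ℚ) (b : ℚ) : Dual ℝ ((ι → ℝ) × ℝ) :=
  ∑ i, a i • (LinearMap.proj i ∘ₗ LinearMap.fst ℝ (ι → ℝ) ℝ) - b • LinearMap.snd ℝ (ι → ℝ) ℝ

lemma hyperplaneForm_mem_rationalForms (a : ι → ℚ) (b : ℚ) :
    hyperplaneForm a b ∈ rationalForms ι :=
  sub_mem (sum_mem fun i _ => Submodule.smul_mem _ _ (proj_comp_fst_mem_rationalForms i))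
    (Submodule.smul_mem _ _ snd_mem_rationalForms)

lemma hyperplaneForm_mk_one (a : ι → ℚ) (b : ℚ) (x : ι → ℝ) :
    hyperplaneForm a b (x, 1) = ∑ i, (a i : ℝ) * x i - b := by
  simp [hyperplaneForm, Rat.smul_def]

end RationalForms

section LatticePoints

variable {ι : Type*}

/-- The number of points of the lattice `(1 / t) ℤ ^ ι` in `s`; it is `0` if there are infinitely
many of them. -/
noncomputable def latticeCount (s : Set (ι → ℝ)) (t : ℕ) : ℕ :=
  {z : ι → ℤ | (fun i => (z i : ℝ) / t) ∈ s}.ncard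

/-- The sets whose indicator at `z / t` is a piecewise quasipolynomial in `(t, z)`, for `z ∈ ℤ ^ ι`
and `t > 0`. They form a Boolean algebra containing the rational half-spaces. -/
def IsLatticeConstructible (s : Set (ι → ℝ)) : Prop :=
  ∃ f ∈ piecewiseQuasipolynomials (ℤ × (ι → ℤ)), ∀ t : ℕ, 0 < t → ∀ z : ι → ℤ,
    f (t, z) = s.indicator 1 fun i => (z i : ℝ) / t

namespace IsLatticeConstructible

lemma compl {s : Set (ι → ℝ)} (hs : IsLatticeConstructible s) : IsLatticeConstructible sᶜ := by
  obtain ⟨f, hf, hfs⟩ := hs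
  refine ⟨1 - f, sub_mem (one_mem _) hf, fun t ht z => ?_⟩
  simp [Set.indicator_compl, hfs t ht z]

lemma inter {s u : Set (ι → ℝ)} (hs : IsLatticeConstructible s) (hu : IsLatticeConstructible u) :
    IsLatticeConstructible (s ∩ u) := by
  obtain ⟨f, hf, hfs⟩ := hs
  obtain ⟨g, hg, hgu⟩ := hu
  refine ⟨f * g, mul_mem hf hg, fun t ht z => ?_⟩
  simp [Set.inter_indicator_one, hfs t ht z, hgu t ht z]

lemma biInter {κ : Type*} {I : Set κ} (hI : I.Finite) {s : κ → Set (ι → ℝ)}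
    (hs : ∀ i ∈ I, IsLatticeConstructible (s i)) : IsLatticeConstructible (⋂ i ∈ I, s i) := by
  induction I, hI using Set.Finite.induction_on with
  | empty => exact ⟨1, one_mem _, by simp⟩
  | insert _ _ ih =>
    rw [Set.biInter_insert]
    exact (hs _ (.inl rfl)).inter (ih fun i hi => hs i (.inr hi))

end IsLatticeConstructible

lemma isLatticeConstructible_setOf_nonneg {φ : Dual ℝ ((ι → ℝ) × ℝ)} (hφ : φ ∈ rationalForms ι) :
    IsLatticeConstructible {x | 0 ≤ φ (x, 1)} := by
  obtain ⟨N, hN, l, hl⟩ := exists_addMonoidHom_eq_mul_of_mem_rationalForms hφ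
  refine ⟨_, indicator_nonneg_mem_piecewiseQuasipolynomials l, fun t ht z => ?_⟩
  have hlφ : (l (t, z) : ℝ) = (N * t) * φ (fun i => (z i : ℝ) / t, 1) := by
    rw [hl, mul_assoc, ← smul_eq_mul (t : ℝ), ← map_smul]
    congr 2
    ext i <;> simp
    field_simp
  have hiff : 0 ≤ l (t, z) ↔ 0 ≤ φ (fun i => (z i : ℝ) / t, 1) := by
    rw [← Int.cast_nonneg_iff (R := ℝ), hlφ, mul_nonneg_iff_of_pos_left (by positivity)]
  simp [Set.indicator_apply, hiff]

lemma isLatticeConstructible_setOf_pos {φ : Dual ℝ ((ι → ℝ) × ℝ)} (hφ : φ ∈ rationalForms ι) :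
    IsLatticeConstructible {x | 0 < φ (x, 1)} := by
  convert! (isLatticeConstructible_setOf_nonneg (neg_mem hφ)).compl using 1
  ext x
  simp

lemma isLatticeConstructible_setOf_ne_zero {φ : Dual ℝ ((ι → ℝ) × ℝ)}
    (hφ : φ ∈ rationalForms ι) : IsLatticeConstructible {x | φ (x, 1) ≠ 0} := by
  convert! ((isLatticeConstructible_setOf_nonneg hφ).inter
    (isLatticeConstructible_setOf_nonneg (neg_mem hφ))).compl using 1
  ext x
  simp [le_antisymm_iff, and_comm]

lemma exists_quasipolynomial_eq_latticeCount {d : ℕ} {s : Set (Fin d → ℝ)}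
    (hs : IsLatticeConstructible s) (hb : Bornology.IsBounded s) :
    ∃ H ∈ quasipolynomials, ∀ t : ℕ, 0 < t → (latticeCount s t : ℚ) = H t := by
  classical
  obtain ⟨f, hf, hfs⟩ := hs
  obtain ⟨R, hR⟩ := hb.exists_norm_le
  obtain ⟨B, hB⟩ := exists_nat_gt R
  obtain ⟨F, hF, hFf⟩ := exists_sum_box_mem_piecewiseQuasipolynomials hf
    (AddMonoidHom.mulLeft (B : ℤ))
  obtain ⟨H, hH, hHF⟩ := exists_quasipolynomial_eq_natCast hF
  refine ⟨H, hH, fun t ht => ?_⟩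
  have hbox (z : Fin d → ℤ) (hz : (fun i => (z i : ℝ) / t) ∈ s) :
      z ∈ Fintype.piFinset fun _ => Finset.Ico (-(B * t : ℤ)) (B * t) := by
    refine Fintype.mem_piFinset.2 fun i => ?_
    have hzi : |(z i : ℝ) / t| < B := ((norm_le_pi_norm _ i).trans (hR _ hz)).trans_lt hB
    rw [abs_div, Nat.abs_cast, div_lt_iff₀ (by positivity)] at hzi
    obtain ⟨hlow, hupp⟩ := abs_lt.1 (by exact_mod_cast hzi : |z i| < B * t)
    exact Finset.mem_Ico.2 ⟨hlow.le, hupp⟩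
  rw [← hHF t ht, hFf t (by simp only [AddMonoidHom.coe_mulLeft]; positivity)]
  simp only [hfs t ht, AddMonoidHom.coe_mulLeft, Set.indicator_apply, Pi.one_apply,
    Finset.sum_boole, latticeCount, ← Set.ncard_coe_finset, Finset.coe_filter]
  congr 2
  ext z
  exact ⟨fun hz => ⟨hbox z hz, hz⟩, And.right⟩

lemma mem_span_range_basisFun_iff [Finite ι] {x : ι → ℝ} :
    x ∈ Submodule.span ℤ (Set.range (Pi.basisFun ℝ ι)) ↔ ∃ z : ι → ℤ, (fun i => (z i : ℝ)) = x := by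
  rw [Module.Basis.mem_span_iff_repr_mem]
  simp [funext_iff, Classical.skolem]

lemma tendsto_latticeCount_div_pow [Fintype ι] {s : Set (ι → ℝ)} (hb : Bornology.IsBounded s)
    (hs : MeasurableSet s) (hs0 : volume (frontier s) = 0) :
    Tendsto (fun t : ℕ => (latticeCount s t : ℝ) / (t : ℝ) ^ Fintype.card ι) atTop
      (𝓝 (volume.real s)) := by
  refine (tendsto_card_div_pow_atTop_volume s hb hs hs0).congr' ?_
  filter_upwards [eventually_gt_atTop 0] with t ht
  have ht0 : (t : ℝ) ≠ 0 := by positivity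
  have hinj : Function.Injective fun (z : ι → ℤ) i => (z i : ℝ) / t := fun z w hzw =>
    funext fun i => Int.cast_injective ((div_left_inj' ht0).1 (congrFun hzw i))
  rw [Nat.card_coe_set_eq, latticeCount, ← Set.ncard_image_of_injective _ hinj]
  congr 3
  ext x
  rw [Set.mem_inter_iff, Set.mem_smul_set_iff_inv_smul_mem₀ (inv_ne_zero ht0), inv_inv,
    SetLike.mem_coe, mem_span_range_basisFun_iff]
  have hx (z : ι → ℤ) : (fun i => (z i : ℝ)) = (t : ℝ) • x ↔ (fun i => (z i : ℝ) / t) = x := by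
    simp [funext_iff, div_eq_iff ht0, mul_comm]
  simp only [hx, Set.mem_image, Set.mem_ofPred_eq]
  exact ⟨fun ⟨hxs, z, hz⟩ => ⟨z, hz ▸ hxs, hz⟩, fun ⟨z, hz, hzx⟩ => ⟨hzx ▸ hz, z, hzx⟩⟩

end LatticePoints

section OpenRegion

variable {ι : Type*} [Fintype ι]

/-- The complement `P° \ ⋃ A` of the hyperplanes `∑ i, a i * x i = b`, `(a, b) ∈ A`, in the interior
of `P`. -/
def openRegion (P : Set (ι → ℝ)) (A : Finset ((ι → ℚ) × ℚ)) : Set (ι → ℝ) :=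
  {x | x ∈ interior P ∧ ∀ ab ∈ A, ∑ i, (ab.1 i : ℝ) * x i ≠ ab.2}

lemma openRegion_eq_inter (P : Set (ι → ℝ)) (A : Finset ((ι → ℚ) × ℚ)) :
    openRegion P A = interior P ∩
      ⋂ ab ∈ (A : Set ((ι → ℚ) × ℚ)), {x | hyperplaneForm ab.1 ab.2 (x, 1) ≠ 0} := by
  ext x
  simp [openRegion, hyperplaneForm_mk_one, sub_eq_zero]

lemma isLatticeConstructible_openRegion {V : Finset (ι → ℝ)}
    (hV : ∀ v ∈ V, ∀ i, ∃ a : ℚ, v i = a)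
    (hne : (interior (convexHull ℝ (V : Set (ι → ℝ)))).Nonempty) (A : Finset ((ι → ℚ) × ℚ)) :
    IsLatticeConstructible (openRegion (convexHull ℝ (V : Set (ι → ℝ))) A) := by
  obtain ⟨H, hH, hHD, hint⟩ := exists_interior_convexHull_eq hV hne
  rw [openRegion_eq_inter, hint]
  have hpos := IsLatticeConstructible.biInter hH fun φ hφ =>
    isLatticeConstructible_setOf_pos (hHD hφ)
  simp only [← Set.ofPred_forall] at hpos
  exact hpos.inter (.biInter A.finite_toSet fun ab _ =>
    isLatticeConstructible_setOf_ne_zero (hyperplaneForm_mem_rationalForms ab.1 ab.2))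

variable {P : Set (ι → ℝ)} {A : Finset ((ι → ℚ) × ℚ)}

lemma isOpen_openRegion : IsOpen (openRegion P A) := by
  simp only [openRegion, Set.ofPred_and, Set.ofPred_forall]
  exact isOpen_interior.inter
    (isOpen_biInter_finset fun ab _ => isOpen_ne_fun (by fun_prop) (by fun_prop))

lemma openRegion_subset : openRegion P A ⊆ P := fun _ hx => interior_subset hx.1

lemma ae_sum_mul_ne {a : ι → ℝ} (ha : a ≠ 0) (b : ℝ) :
    ∀ᵐ x : ι → ℝ, ∑ i, a i * x i ≠ b := by
  classical
  let f : (ι → ℝ) →ₗ[ℝ] ℝ := Fintype.linearCombination ℝ a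
  have hf : f ≠ 0 := fun hf => ha <| funext fun i => by
    simpa [f, Fintype.linearCombination_apply_single] using LinearMap.congr_fun hf (Pi.single i 1)
  have := (ae_comp_linearMap_mem_iff f volume volume (f.surjective hf)
    (measurableSet_singleton b).compl).2 (Measure.ae_ne volume b)
  simpa [f, Fintype.linearCombination_apply, mul_comm] using this

lemma volume_closure_sdiff_openRegion (hP : Convex ℝ P) (hA : ∀ ab ∈ A, ab.1 ≠ 0) :
    volume (closure P \ openRegion P A) = 0 := by
  have hfr : ∀ᵐ x, x ∉ frontier P := measure_eq_zero_iff_ae_notMem.1 (hP.addHaar_frontier volume)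
  have hhyp : ∀ᵐ x : ι → ℝ, ∀ ab ∈ A, ∑ i, (ab.1 i : ℝ) * x i ≠ ab.2 := by
    refine (ae_ball_iff A.countable_toSet).2 fun ab hab => ae_sum_mul_ne (fun h => hA ab hab ?_) _
    exact funext fun i => by simpa using congrFun h i
  rw [measure_eq_zero_iff_ae_notMem]
  filter_upwards [hfr, hhyp] with x hx hxA hxR
  exact hxR.2 ⟨by_contra fun hxP => hx ⟨hxR.1, hxP⟩, hxA⟩

lemma tendsto_latticeCount_openRegion_div_pow (hP : Convex ℝ P) (hb : Bornology.IsBounded P)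
    (hA : ∀ ab ∈ A, ab.1 ≠ 0) :
    Tendsto (fun t : ℕ => (latticeCount (openRegion P A) t : ℝ) / (t : ℝ) ^ Fintype.card ι) atTop
      (𝓝 (volume.real P)) := by
  have hnull := volume_closure_sdiff_openRegion hP hA
  have hvol : volume (openRegion P A) = volume P :=
    measure_eq_measure_of_null_sdiff openRegion_subset
      (measure_mono_null (Set.sdiff_subset_sdiff_left subset_closure) hnull)
  have hfr : volume (frontier (openRegion P A)) = 0 := by
    rw [isOpen_openRegion.frontier_eq]
    exact measure_mono_null (Set.sdiff_subset_sdiff_left (closure_mono openRegion_subset)) hnull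
  rw [Measure.real, ← hvol]
  exact tendsto_latticeCount_div_pow (hb.subset openRegion_subset)
    isOpen_openRegion.measurableSet hfr

end OpenRegion

section LeadingCoefficient

lemma degree_eq_and_coeff_eq_of_tendsto {α : Type*} {l : Filter α} [l.NeBot] {q : ℝ[X]} {n : ℕ}
    {v : ℝ} (hv : v ≠ 0) {u : α → ℝ} (hu : Tendsto u l atTop)
    (h : Tendsto (fun a => q.eval (u a) / u a ^ n) l (𝓝 v)) :
    q.degree = n ∧ q.coeff n = v := by
  have hX : (X ^ n : ℝ[X]).degree = n := degree_X_pow n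
  have hdiv (f : ℝ[X]) : (fun x => f.eval x / (X ^ n : ℝ[X]).eval x) ∘ u =
      fun a => f.eval (u a) / u a ^ n := by
    ext a; simp
  rcases lt_trichotomy q.degree n with hq | hq | hq
  · have hzero := (div_tendsto_atTop_zero_of_degree_lt q (X ^ n) (by rwa [hX])).comp hu
    exact absurd (tendsto_nhds_unique h (hdiv q ▸ hzero)) hv
  · have hlead := (div_tendsto_atTop_leadingCoeff_div_of_degree_eq q (X ^ n)
      (by rw [hX, hq])).comp hu
    rw [hdiv, leadingCoeff_X_pow, div_one] at hlead
    rw [← tendsto_nhds_unique hlead h, leadingCoeff, natDegree_eq_of_degree_eq_some hq]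
    exact ⟨hq, rfl⟩
  · have hinf := (abs_div_tendsto_atTop_atTop_of_degree_gt q (X ^ n) (by rwa [hX])
      (pow_ne_zero _ X_ne_zero)).comp hu
    simp only [Function.comp_def, eval_pow, eval_X] at hinf
    exact absurd h.abs (not_tendsto_nhds_of_tendsto_atTop hinf _)

lemma degree_constituent_eq_and_coeff_eq {f : ℕ → ℚ} {p : ℕ} (hp : 0 < p) {F : ℤ → ℚ[X]}
    (hF : Periodic F (p : ℤ)) (hf : ∀ t : ℕ, 0 < t → f t = (F t).eval (t : ℚ)) {n : ℕ} {v : ℝ}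
    (hv : v ≠ 0) (h : Tendsto (fun t => (f t : ℝ) / (t : ℝ) ^ n) atTop (𝓝 v)) (k : ℕ) :
    (F k).degree = n ∧ ((F k).coeff n : ℝ) = v := by
  let u : ℕ → ℕ := fun m => k + (m + 1) * p
  have hu : Tendsto u atTop atTop :=
    tendsto_atTop_mono (fun m => by simp only [u, id]; nlinarith) tendsto_id
  have heval (m : ℕ) : (f (u m) : ℝ) = ((F k).map (algebraMap ℚ ℝ)).eval (u m : ℝ) := by
    have hFu : F (u m) = F k := by simpa [u] using hF.nat_mul (m + 1) k
    rw [hf (u m) (by positivity), hFu, ← eq_ratCast (algebraMap ℚ ℝ), ← eval_map_apply,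
      map_natCast]
  have hlead := degree_eq_and_coeff_eq_of_tendsto (n := n) (q := (F k).map (algebraMap ℚ ℝ)) hv
    (tendsto_natCast_atTop_atTop.comp hu) ((h.comp hu).congr fun m => by
      simp only [Function.comp_apply, heval])
  rwa [degree_map, coeff_map] at hlead

end LeadingCoefficient

end Ehrhart

/-- the open Ehrhart counting function of a rational inside-out polytope
`(P, A)` in `ℝ^d` is a quasipolynomial of degree `d` whose leading coefficient is the
volume of `P` in every constituent. -/
theorem stmt_3 (d : ℕ)
    (V : Finset (Fin d → ℝ)) (hV : ∀ v ∈ V, ∀ i : Fin d, ∃ a : ℚ, v i = (a : ℝ))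
    (P : Set (Fin d → ℝ)) (hP : P = convexHull ℝ (V : Set (Fin d → ℝ)))
    (hPint : (interior P).Nonempty)
    (A : Finset ((Fin d → ℚ) × ℚ)) (hA : ∀ ab ∈ A, ab.1 ≠ 0)
    (E : ℕ → ℕ)
    (hE : ∀ t : ℕ, 0 < t → E t = Set.ncard {z : Fin d → ℤ |
      (fun i => (z i : ℝ) / (t : ℝ)) ∈ interior P ∧
      ∀ ab ∈ A, (∑ i : Fin d, (ab.1 i : ℝ) * ((z i : ℝ) / (t : ℝ))) ≠ (ab.2 : ℝ)}) :
    ∃ p : ℕ, 0 < p ∧ ∃ f : ℕ → Polynomial ℚ,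
      (∀ k < p, (f k).degree = (d : WithBot ℕ) ∧
        ((f k).coeff d : ℝ) = (volume P).toReal) ∧
      (∀ t : ℕ, 0 < t → (E t : ℚ) = (f (t % p)).eval (t : ℚ)) := by
  have hbdd : Bornology.IsBounded P := hP ▸ isBounded_convexHull.2 V.finite_toSet.isBounded
  have hconv : Convex ℝ P := hP ▸ convex_convexHull ℝ _
  have hvol : (volume P).toReal ≠ 0 := (ENNReal.toReal_pos
    (Measure.measure_pos_of_nonempty_interior volume hPint).ne' hbdd.measure_lt_top.ne).ne'
  obtain ⟨_, ⟨p, hp, F, hF, hH⟩, hcount⟩ := Ehrhart.exists_quasipolynomial_eq_latticeCount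
    (hP ▸ Ehrhart.isLatticeConstructible_openRegion hV (hP ▸ hPint) A)
    (hbdd.subset Ehrhart.openRegion_subset)
  simp only [hH, Int.cast_natCast] at hcount
  have hlim := Ehrhart.tendsto_latticeCount_openRegion_div_pow hconv hbdd hA
  rw [Fintype.card_fin] at hlim
  refine ⟨p, hp, fun k => F k, fun k _ => ?_, fun t ht => ?_⟩
  · exact Ehrhart.degree_constituent_eq_and_coeff_eq hp hF hcount hvol hlim k
  · have hFt : F ((t % p : ℕ) : ℤ) = F t := by
      push_cast
      rw [Int.emod_def, mul_comm]
      exact hF.sub_int_mul_eq _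
    rw [hE t ht]
    change _ = (F ((t % p : ℕ) : ℤ)).eval (t : ℚ)
    rw [hFt]
    exact hcount t ht
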